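/- Let p be a prime, r ≥ 1, and let C be a free convolutional code of length n and rank k over ℤ/p^r with dual code C⊥ (the set of length-n vectors of Laurent series orthogonal to every codeword of C under the standard bilinear form). Let G be a k × n Reduced Internal Degree Matrix encoder of C and H an (n−k) × n Reduced Internal Degree Matrix encoder of C⊥ (so in particular G·Hᵀ = 0 and both have full row rank). Then the monic greatest common divisor in 𝔽_p[D] of the k × k minors of the reduction of G modulo p equals the monic greatest common divisor in 𝔽_p[D] of the (n−k) × (n−k) minors of the reduction of H modulo p; that is, Δ_p(C) = Δ_p(C⊥). -/

import Mathlib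

open Polynomial Matrix

/-- The natural ring homomorphism from polynomials over a commutative ring to Laurent series. -/
noncomputable def polyToLS (R : Type*) [CommRing R] : Polynomial R →+* LaurentSeries R :=
  (HahnSeries.ofPowerSeries ℤ R).comp Polynomial.coeToPowerSeries.ringHom

/-- The `k × k` minor of a `k × n` matrix determined by a choice of columns. -/
noncomputable def minorOn {R : Type*} [CommRing R] {k n : ℕ}
    (G : Matrix (Fin k) (Fin n) R) (c : Fin k → Fin n) : R :=
  (G.submatrix id c).det

/-- A polynomial matrix has full row rank if some maximal minor is a non-zero-divisor. -/
def FullRowRank {R : Type*} [CommRing R] {k n : ℕ}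
    (G : Matrix (Fin k) (Fin n) (Polynomial R)) : Prop :=
  ∃ c : Fin k → Fin n, minorOn G c ∈ nonZeroDivisors (Polynomial R)

/-- The free convolutional code (row span over the Laurent series ring) generated by `G`. -/
noncomputable def code {R : Type*} [CommRing R] {k n : ℕ}
    (G : Matrix (Fin k) (Fin n) (Polynomial R)) : Set (Fin n → LaurentSeries R) :=
  {v | ∃ u : Fin k → LaurentSeries R, v = Matrix.vecMul u (G.map (polyToLS R))}

/-- The internal degree of a polynomial matrix: the maximal degree of its maximal minors. -/
noncomputable def intdeg {R : Type*} [CommRing R] {k n : ℕ}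
    (G : Matrix (Fin k) (Fin n) (Polynomial R)) : WithBot ℕ :=
  Finset.univ.sup fun c : Fin k → Fin n => (minorOn G c).degree

/-- Coefficientwise/entrywise reduction modulo `p` of a matrix over `(ℤ/p^r)[D]`. -/
noncomputable def reduceMod (p r : ℕ) (hr : r ≠ 0) {k n : ℕ}
    (G : Matrix (Fin k) (Fin n) (Polynomial (ZMod (p ^ r)))) :
    Matrix (Fin k) (Fin n) (Polynomial (ZMod p)) :=
  G.map (Polynomial.map (ZMod.castHom (dvd_pow_self p hr) (ZMod p)))

/-- The monic greatest common divisor in `𝔽_p[D]` of the maximal minors of a matrix. -/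
noncomputable def gcdMinors {p : ℕ} [Fact p.Prime] {k n : ℕ}
    (G : Matrix (Fin k) (Fin n) (Polynomial (ZMod p))) : Polynomial (ZMod p) :=
  Finset.univ.gcd fun c : Fin k → Fin n => minorOn G c

/-- A vector of Laurent series has finite Hamming weight iff each component has
finitely many nonzero coefficients. -/
def FiniteWeight {R : Type*} [CommRing R] {m : ℕ} (v : Fin m → LaurentSeries R) : Prop :=
  ∀ i, (v i).support.Finite

/-- A polynomial generator matrix is non-catastrophic if every input whose output has finite
Hamming weight itself has finite Hamming weight. -/
noncomputable def NonCatastrophic {R : Type*} [CommRing R] {k n : ℕ}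
    (G : Matrix (Fin k) (Fin n) (Polynomial R)) : Prop :=
  ∀ u : Fin k → LaurentSeries R,
    FiniteWeight (Matrix.vecMul u (G.map (polyToLS R))) → FiniteWeight u

/-- The dual of a set of words: all vectors orthogonal to every word. -/
def dualCode {R : Type*} [CommRing R] {n : ℕ}
    (C : Set (Fin n → LaurentSeries R)) : Set (Fin n → LaurentSeries R) :=
  {v | ∀ w ∈ C, ∑ i, v i * w i = 0}

/-!
Write `Δ` for the gcd of the maximal minors modulo `p`. If `G * Hᵀ = 0`, complementary maximal
minors of `G` and `H` are proportional.

Lift `G` to a matrix over `A[X]` with `A` a principal ideal domain mapping onto the coefficient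
ring (`A = ℤ` for `ℤ/p^r`). After inverting one element congruent to `1` modulo `p`, the kernel of
the lift is free, and a prime of `A[X]` dividing all maximal minors of a basis of it is a unit
modulo `p`. As `A[X]` is factorial, proportionality of the minors then yields an encoder `H₀` of
the dual code with `Δ(H₀) ∣ Δ(G)`.

It remains to show `Δ(H) ∣ Δ(H₀)`, which is checked at each prime `f` of `𝔽_p[X]`. The row modules
of `H` and `H₀` are commensurable, so they can be glued to a free module, spanned by the rows of
`V` say, that agrees with that of `H₀` at `f` and with that of `H` elsewhere. Then `V` encodes the
same code as `H`. After scaling one row of `V` by a suitable unit, the internal degrees of `V` and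
`H` differ by as much as the degrees of `Δ(V)` and `Δ(H)`, so minimality of `H` gives `deg Δ(H) ≤
deg Δ(V)`. As `Δ(V)` and `Δ(H)` differ by powers of `f` only, the order of `f` in `Δ(H)` is at
most that in `Δ(V)`, which is that in `Δ(H₀)`.

Hence `Δ(H) ∣ Δ(G)`, and the roles of `G` and `H` are symmetric.
-/

section Minors

variable {R : Type*} [CommRing R] {k l n : ℕ}

theorem minorOn_mul (A : Matrix (Fin k) (Fin k) R) (G : Matrix (Fin k) (Fin n) R)
    (c : Fin k → Fin n) : minorOn (A * G) c = A.det * minorOn G c :=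
  det_mul A (G.submatrix id c)

theorem minorOn_smul (a : R) (G : Matrix (Fin k) (Fin n) R) (c : Fin k → Fin n) :
    minorOn (a • G) c = a ^ k * minorOn G c := by
  rw [minorOn, submatrix_smul, Pi.smul_apply, Pi.smul_apply, det_smul, Fintype.card_fin]; rfl

theorem minorOn_map {S : Type*} [CommRing S] (f : R →+* S) (G : Matrix (Fin k) (Fin n) R)
    (c : Fin k → Fin n) : minorOn (G.map f) c = f (minorOn G c) :=
  (f.map_det (G.submatrix id c)).symm

theorem minorOn_fin_zero (G : Matrix (Fin 0) (Fin n) R) (c : Fin 0 → Fin n) : minorOn G c = 1 :=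
  det_isEmpty

theorem injective_of_minorOn_ne_zero {G : Matrix (Fin k) (Fin n) R} {c : Fin k → Fin n}
    (hc : minorOn G c ≠ 0) : Function.Injective c := by
  intro i j hij
  by_contra hne
  exact hc (det_zero_of_column_eq hne fun x => congrArg (G x) hij)

theorem exists_sumEquiv_comp_inl_eq (hkl : k + l = n) {c : Fin k → Fin n}
    (hc : Function.Injective c) : ∃ e : Fin k ⊕ Fin l ≃ Fin n, e ∘ Sum.inl = c := by
  have hcard : Fintype.card (Fin l) = Fintype.card ((Set.range c)ᶜ : Set (Fin n)) := by
    rw [Fintype.card_compl_set, Set.card_range_of_injective hc]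
    simp only [Fintype.card_fin]; lia
  exact ⟨((Equiv.ofInjective c hc).sumCongr (Fintype.equivOfCardEq hcard)).trans
    (Equiv.Set.sumCompl _), funext fun i => by simp⟩

theorem exists_sumEquiv_comp_inr_eq (hkl : k + l = n) {d : Fin l → Fin n}
    (hd : Function.Injective d) : ∃ e : Fin k ⊕ Fin l ≃ Fin n, e ∘ Sum.inr = d := by
  obtain ⟨e, he⟩ := exists_sumEquiv_comp_inl_eq (l := k) ((Nat.add_comm l k).trans hkl) hd
  exact ⟨(Equiv.sumComm _ _).trans e, he⟩

theorem mul_transpose_eq_zero_comm {G : Matrix (Fin k) (Fin n) R} {H : Matrix (Fin l) (Fin n) R} :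
    G * Hᵀ = 0 ↔ H * Gᵀ = 0 := by
  rw [← transpose_eq_zero, transpose_mul, transpose_transpose]

theorem mul_transpose_map_eq_zero {S : Type*} [CommRing S] (f : R →+* S)
    {G : Matrix (Fin k) (Fin n) R} {H : Matrix (Fin l) (Fin n) R} (hGH : G * Hᵀ = 0) :
    G.map f * (H.map f)ᵀ = 0 := by
  rw [← transpose_map, ← Matrix.map_mul, hGH, Matrix.map_zero _ (map_zero f)]

theorem det_fromRows_one_submatrix (G : Matrix (Fin k) (Fin n) R) (e : Fin k ⊕ Fin l ≃ Fin n) :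
    ((fromRows G ((1 : Matrix (Fin n) (Fin n) R).submatrix (e ∘ Sum.inr) id)).submatrix id e).det =
      minorOn G (e ∘ Sum.inl) := by
  have hblocks :
      (fromRows G ((1 : Matrix (Fin n) (Fin n) R).submatrix (e ∘ Sum.inr) id)).submatrix id e =
        fromBlocks (G.submatrix id (e ∘ Sum.inl)) (G.submatrix id (e ∘ Sum.inr)) 0 1 := by
    ext (i | i) (j | j) <;> simp [one_apply]
  rw [hblocks, det_fromBlocks_zero₂₁, det_one, mul_one, minorOn]

theorem det_fromCols_one_submatrix (H : Matrix (Fin l) (Fin n) R) (d : Fin k ⊕ Fin l ≃ Fin n) :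
    ((fromCols ((1 : Matrix (Fin n) (Fin n) R).submatrix id (d ∘ Sum.inl)) Hᵀ).submatrix d id).det =
      minorOn H (d ∘ Sum.inr) := by
  have hblocks :
      (fromCols ((1 : Matrix (Fin n) (Fin n) R).submatrix id (d ∘ Sum.inl)) Hᵀ).submatrix d id =
        fromBlocks 1 (H.submatrix id (d ∘ Sum.inl))ᵀ 0 (H.submatrix id (d ∘ Sum.inr))ᵀ := by
    ext (i | i) (j | j) <;> simp [one_apply]
  rw [hblocks, det_fromBlocks_zero₂₁, det_one, one_mul, det_transpose, minorOn]

theorem associated_minorOn_mul_minorOn {G : Matrix (Fin k) (Fin n) R} {H : Matrix (Fin l) (Fin n) R}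
    (hGH : G * Hᵀ = 0) (e d : Fin k ⊕ Fin l ≃ Fin n) :
    Associated (minorOn G (e ∘ Sum.inl) * minorOn H (d ∘ Sum.inr))
      (minorOn H (e ∘ Sum.inr) * minorOn G (d ∘ Sum.inl)) := by
  -- Both sides are `det (M * Z)` up to sign.
  let M : Matrix (Fin k ⊕ Fin l) (Fin n) R :=
    fromRows G ((1 : Matrix (Fin n) (Fin n) R).submatrix (e ∘ Sum.inr) id)
  let Z : Matrix (Fin n) (Fin k ⊕ Fin l) R :=
    fromCols ((1 : Matrix (Fin n) (Fin n) R).submatrix id (d ∘ Sum.inl)) Hᵀ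
  have hMZ : (M * Z).det = minorOn G (d ∘ Sum.inl) * minorOn H (e ∘ Sum.inr) := by
    have hblocks : M * Z = fromBlocks (G.submatrix id (d ∘ Sum.inl)) 0
        ((1 : Matrix (Fin n) (Fin n) R).submatrix (e ∘ Sum.inr) (d ∘ Sum.inl))
        (H.submatrix id (e ∘ Sum.inr))ᵀ := by
      rw [fromRows_mul_fromCols, hGH]
      congr 1 <;> ext i j <;> simp [mul_apply, one_apply]
    rw [hblocks, det_fromBlocks_zero₁₂, det_transpose, minorOn, minorOn]
  let σ : Equiv.Perm (Fin k ⊕ Fin l) := d.trans e.symm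
  have hperm : (Z.submatrix d id).det = (Equiv.Perm.sign σ : ℤ) * (Z.submatrix e id).det := by
    rw [← det_permute]
    congr 1
    ext i j
    simp [σ]
  have hsplit : M * Z = M.submatrix id e * Z.submatrix e id := by
    rw [submatrix_mul_equiv]; rfl
  have hsign : IsUnit ((Equiv.Perm.sign σ : ℤ) : R) :=
    (Equiv.Perm.sign σ).isUnit.map (Int.castRingHom R)
  have hprod : minorOn G (e ∘ Sum.inl) * minorOn H (d ∘ Sum.inr) =
      (Equiv.Perm.sign σ : ℤ) * (minorOn H (e ∘ Sum.inr) * minorOn G (d ∘ Sum.inl)) := by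
    rw [mul_comm (minorOn H _), ← det_fromRows_one_submatrix, ← det_fromCols_one_submatrix, ← hMZ,
      hsplit, det_mul, hperm]
    ring
  rw [hprod]
  exact associated_unit_mul_left _ _ hsign

end Minors

section MinorGCD

variable {R : Type*} [CommRing R] [NormalizedGCDMonoid R] {k l n : ℕ}

/-- The normalized greatest common divisor of the maximal minors of a matrix, taken, as in
`gcdMinors`, over all choices of columns; repeated columns only contribute zeros. -/
noncomputable def minorGCD (M : Matrix (Fin l) (Fin n) R) : R :=
  Finset.univ.gcd fun c : Fin l → Fin n => minorOn M c

theorem minorGCD_dvd_minorOn (M : Matrix (Fin l) (Fin n) R) (c : Fin l → Fin n) :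
    minorGCD M ∣ minorOn M c :=
  Finset.gcd_dvd (Finset.mem_univ c)

theorem dvd_mul_minorGCD_iff {M : Matrix (Fin l) (Fin n) R} {x a : R} :
    x ∣ a * minorGCD M ↔ ∀ c, x ∣ a * minorOn M c := by
  rw [minorGCD, ← (Finset.gcd_mul_left' _ _ a).dvd_iff_dvd_right, Finset.dvd_gcd_iff]
  simp only [Finset.mem_univ, true_imp_iff]

theorem dvd_minorGCD_iff {M : Matrix (Fin l) (Fin n) R} {x : R} :
    x ∣ minorGCD M ↔ ∀ c, x ∣ minorOn M c := by
  simpa only [one_mul] using dvd_mul_minorGCD_iff (M := M) (x := x) (a := 1)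

theorem minorGCD_ne_zero {M : Matrix (Fin l) (Fin n) R} {c : Fin l → Fin n}
    (hc : minorOn M c ≠ 0) : minorGCD M ≠ 0 :=
  ne_zero_of_dvd_ne_zero hc (minorGCD_dvd_minorOn M c)

theorem minorGCD_dvd_pow_mul_minorGCD {V H : Matrix (Fin l) (Fin n) R}
    {A : Matrix (Fin l) (Fin l) R} {a : R} (h : a • V = A * H) :
    minorGCD H ∣ a ^ l * minorGCD V :=
  dvd_mul_minorGCD_iff.2 fun c => by
    rw [← minorOn_smul, h, minorOn_mul]
    exact (minorGCD_dvd_minorOn H c).mul_left _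

theorem associated_mul_minorGCD_of_forall {M M' : Matrix (Fin l) (Fin n) R} {x y : R}
    (h : ∀ c, x * minorOn M c = y * minorOn M' c) :
    Associated (x * minorGCD M) (y * minorGCD M') := by
  refine (Finset.gcd_mul_left' _ _ x).symm.trans (.trans ?_ (Finset.gcd_mul_left' _ _ y))
  rw [funext h]
  exact .refl _

theorem mul_minorGCD_dvd_mul_minorGCD {G : Matrix (Fin k) (Fin n) R} {H : Matrix (Fin l) (Fin n) R}
    (hGH : G * Hᵀ = 0) (e : Fin k ⊕ Fin l ≃ Fin n) :
    minorOn G (e ∘ Sum.inl) * minorGCD H ∣ minorOn H (e ∘ Sum.inr) * minorGCD G := by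
  have hkl : k + l = n := by simpa using Fintype.card_congr e
  refine dvd_mul_minorGCD_iff.2 fun c => ?_
  by_cases hc : minorOn G c = 0
  · rw [hc, mul_zero]
    exact dvd_zero _
  obtain ⟨d, rfl⟩ := exists_sumEquiv_comp_inl_eq hkl (injective_of_minorOn_ne_zero hc)
  exact (mul_dvd_mul_left _ (minorGCD_dvd_minorOn H _)).trans
    (associated_minorOn_mul_minorOn hGH e d).dvd

theorem associated_mul_minorGCD [IsDomain R] {G : Matrix (Fin k) (Fin n) R}
    {H : Matrix (Fin l) (Fin n) R} (hGH : G * Hᵀ = 0) (e : Fin k ⊕ Fin l ≃ Fin n) :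
    Associated (minorOn G (e ∘ Sum.inl) * minorGCD H) (minorOn H (e ∘ Sum.inr) * minorGCD G) := by
  have hHG : H * Gᵀ = 0 := mul_transpose_eq_zero_comm.1 hGH
  exact associated_of_dvd_dvd (mul_minorGCD_dvd_mul_minorGCD hGH e)
    (mul_minorGCD_dvd_mul_minorGCD hHG ((Equiv.sumComm _ _).trans e))

end MinorGCD

section RowModules

theorem le_of_le_sup_smul_of_isNilpotent {S M : Type*} [CommRing S] [AddCommGroup M] [Module S M]
    {I : Ideal S} (hI : IsNilpotent I) {N L : Submodule S M} (h : N ≤ L ⊔ I • N) : N ≤ L := by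
  have hpow : ∀ m : ℕ, N ≤ L ⊔ I ^ m • N := fun m => by
    induction m with
    | zero => simp
    | succ m ih =>
      calc N ≤ L ⊔ I • N := h
        _ ≤ L ⊔ I • (L ⊔ I ^ m • N) := by gcongr
        _ ≤ L ⊔ I ^ (m + 1) • N := by
          rw [Submodule.smul_sup, ← Submodule.mul_smul, ← pow_succ', ← sup_assoc]
          exact sup_le_sup_right (sup_le le_rfl Submodule.smul_le_right) _
  obtain ⟨m, hm⟩ := hI
  simpa [hm] using hpow m

theorem exists_range_vecMulLinear_eq {K : Type*} [CommRing K] [IsDomain K]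
    [IsPrincipalIdealRing K] {l : ℕ} (P : Submodule K (Fin l → K)) :
    ∃ X : Matrix (Fin l) (Fin l) K, LinearMap.range X.vecMulLinear = P := by
  obtain ⟨m, ⟨b⟩⟩ := P.nonempty_basis_of_pid (Pi.basisFun K (Fin l))
  have hm : m ≤ l := by
    simpa using (b.linearIndependent.map' P.subtype P.ker_subtype).fintype_card_le_finrank
  let g : (Fin l → K) →ₗ[K] P :=
    b.equivFun.symm.toLinearMap ∘ₗ LinearMap.funLeft K K (Fin.castLE hm)
  have hg : LinearMap.range g = ⊤ := LinearMap.range_eq_top.2 <| b.equivFun.symm.surjective.comp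
    (LinearMap.funLeft_surjective_of_injective K K (Fin.castLE hm) (Fin.castLE_injective hm))
  refine ⟨LinearMap.toMatrixRight' (P.subtype ∘ₗ g), ?_⟩
  have hX : (LinearMap.toMatrixRight' (P.subtype ∘ₗ g)).vecMulLinear = P.subtype ∘ₗ g :=
    toLinearMapRight'.apply_symm_apply _
  rw [hX, LinearMap.range_comp_of_range_eq_top _ hg, P.range_subtype]

variable {S : Type*} [CommRing S] {l m n : ℕ}

theorem exists_eq_mul_iff {M : Matrix (Fin m) (Fin n) S} {H : Matrix (Fin l) (Fin n) S} :
    (∃ A : Matrix (Fin m) (Fin l) S, M = A * H) ↔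
      ∀ i, M.row i ∈ LinearMap.range H.vecMulLinear := by
  refine ⟨?_, fun h => ?_⟩
  · rintro ⟨A, rfl⟩ i
    exact ⟨A.row i, rfl⟩
  · choose A hA using h
    exact ⟨of A, funext fun i => (hA i).symm⟩

/-- `V` is obtained by lifting a basis of the reduction of `N` in the coordinates `d`. -/
theorem exists_le_range_vecMulLinear_sup_ker_smul {K : Type*} [CommRing K]
    [IsDomain K] [IsPrincipalIdealRing K] {ρ : S →+* K} (hρ : Function.Surjective ρ)
    {N : Submodule S (Fin n → S)} (d : Fin l → Fin n)
    (hN : ∀ w ∈ N, ρ ∘ w ∘ d = 0 → w ∈ RingHom.ker ρ • N) :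
    ∃ V : Matrix (Fin l) (Fin n) S, (∀ i, V.row i ∈ N) ∧
      N ≤ LinearMap.range V.vecMulLinear ⊔ RingHom.ker ρ • N := by
  have : RingHomSurjective ρ := ⟨hρ⟩
  let f : (Fin n → S) →ₛₗ[ρ] Fin l → K :=
    { toFun := fun w => ρ ∘ w ∘ d
      map_add' := fun v w => funext fun j => map_add ρ _ _
      map_smul' := fun a w => funext fun j => map_mul ρ _ _ }
  obtain ⟨X, hX⟩ := exists_range_vecMulLinear_eq (N.map f)
  have hrow : ∀ i, ∃ v ∈ N, f v = X.row i := fun i => by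
    rw [← Submodule.mem_map, ← hX]
    exact ⟨Pi.single i 1, single_one_vecMul i X⟩
  choose V hVN hVX using hrow
  refine ⟨of V, hVN, fun w hw => ?_⟩
  obtain ⟨u, hu⟩ : f w ∈ LinearMap.range X.vecMulLinear := hX ▸ Submodule.mem_map_of_mem hw
  choose y hy using fun i => hρ (u i)
  have hyV : y ᵥ* of V = ∑ i, y i • V i := vecMul_eq_sum y _
  have hyN : y ᵥ* of V ∈ N := hyV ▸ N.sum_mem fun i _ => N.smul_mem _ (hVN i)
  have hfy : f (y ᵥ* of V) = f w := by
    rw [← hu, hyV, map_sum, vecMulLinear_apply, vecMul_eq_sum]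
    exact Finset.sum_congr rfl fun i _ => by rw [f.map_smulₛₗ, hy, hVX]; rfl
  rw [← add_sub_cancel (y ᵥ* of V) w]
  refine Submodule.add_mem_sup ⟨y, rfl⟩ (hN _ (N.sub_mem hw hyN) ?_)
  exact (map_sub f _ _).trans (sub_eq_zero.2 hfy.symm)

end RowModules

section Commensurability

variable {S : Type*} [CommRing S] {k l n : ℕ}

/-- Each of the row modules of `V` and `H` contains `a` times the other one. -/
def RowsCommensurable (a : S) (V H : Matrix (Fin l) (Fin n) S) : Prop :=
  (∃ A : Matrix (Fin l) (Fin l) S, a • V = A * H) ∧ ∃ B : Matrix (Fin l) (Fin l) S, a • H = B * V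

theorem RowsCommensurable.mono {a b : S} {V H : Matrix (Fin l) (Fin n) S}
    (h : RowsCommensurable a V H) (hab : a ∣ b) : RowsCommensurable b V H := by
  obtain ⟨⟨⟨A, hA⟩, ⟨B, hB⟩⟩, c, rfl⟩ := And.intro h hab
  exact ⟨⟨c • A, by rw [mul_comm, mul_smul, hA, smul_mul]⟩,
    ⟨c • B, by rw [mul_comm, mul_smul, hB, smul_mul]⟩⟩

theorem RowsCommensurable.of_mem_range {a : S} {V H : Matrix (Fin l) (Fin n) S}
    (hV : ∀ i, a • V.row i ∈ LinearMap.range H.vecMulLinear)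
    (hH : ∀ i, a • H.row i ∈ LinearMap.range V.vecMulLinear) : RowsCommensurable a V H :=
  ⟨exists_eq_mul_iff.2 hV, exists_eq_mul_iff.2 hH⟩

theorem eq_zero_of_mulVec_eq_zero_of_comp_inr {G : Matrix (Fin k) (Fin n) S}
    {e : Fin k ⊕ Fin l ≃ Fin n} (hG : minorOn G (e ∘ Sum.inl) ∈ nonZeroDivisors S)
    {z : Fin n → S} (hz : G *ᵥ z = 0) (h0 : z ∘ e ∘ Sum.inr = 0) : z = 0 := by
  have hinl : z ∘ e ∘ Sum.inl = 0 := by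
    refine eq_zero_of_det_mem_nonZeroDivisors_of_mulVec_eq_zero hG (funext fun i => ?_)
    rw [← congrFun hz i]
    simp only [mulVec, dotProduct, submatrix_apply, Function.comp_apply, id_eq]
    rw [← e.sum_comp, Fintype.sum_sum_type, left_eq_add]
    exact Finset.sum_eq_zero fun j _ => mul_eq_zero_of_right _ (congrFun h0 j)
  rw [← e.surjective.injective_comp_right.eq_iff]
  funext i
  rcases i with i | i
  exacts [congrFun hinl i, congrFun h0 i]

theorem minorOn_smul_mem_range_vecMulLinear {G : Matrix (Fin k) (Fin n) S}
    {H : Matrix (Fin l) (Fin n) S} {e : Fin k ⊕ Fin l ≃ Fin n}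
    (hG : minorOn G (e ∘ Sum.inl) ∈ nonZeroDivisors S) (hGH : G * Hᵀ = 0)
    {x : Fin n → S} (hx : G *ᵥ x = 0) :
    minorOn H (e ∘ Sum.inr) • x ∈ LinearMap.range H.vecMulLinear := by
  let B := H.submatrix id (e ∘ Sum.inr)
  let y := (x ∘ e ∘ Sum.inr) ᵥ* B.adjugate
  refine ⟨y, (sub_eq_zero.1 (eq_zero_of_mulVec_eq_zero_of_comp_inr hG ?_ ?_)).symm⟩
  · rw [mulVec_sub, mulVec_smul, hx, vecMulLinear_apply, ← mulVec_transpose, mulVec_mulVec, hGH,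
      smul_zero, zero_mulVec, sub_zero]
  · have hy : (y ᵥ* H) ∘ e ∘ Sum.inr = B.det • (x ∘ e ∘ Sum.inr) := calc
      (y ᵥ* H) ∘ e ∘ Sum.inr = y ᵥ* B := rfl
      _ = B.det • (x ∘ e ∘ Sum.inr) := by
        rw [vecMul_vecMul, adjugate_mul, vecMul_smul, vecMul_one]
    exact sub_eq_zero.2 hy.symm

theorem mulVec_row_eq_zero {G : Matrix (Fin k) (Fin n) S} {H : Matrix (Fin l) (Fin n) S}
    (hGH : G * Hᵀ = 0) (i : Fin l) : G *ᵥ H.row i = 0 :=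
  funext fun j => congrFun (congrFun hGH j) i

theorem rowsCommensurable_of_mul_transpose_eq_zero {G : Matrix (Fin k) (Fin n) S}
    {H H' : Matrix (Fin l) (Fin n) S} {e : Fin k ⊕ Fin l ≃ Fin n}
    (hG : minorOn G (e ∘ Sum.inl) ∈ nonZeroDivisors S) (hH : G * Hᵀ = 0) (hH' : G * H'ᵀ = 0) :
    RowsCommensurable (minorOn H (e ∘ Sum.inr) * minorOn H' (e ∘ Sum.inr)) H H' := by
  refine .of_mem_range (fun i => ?_) fun i => ?_
  · rw [mul_smul]
    exact Submodule.smul_mem _ _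
      (minorOn_smul_mem_range_vecMulLinear hG hH' (mulVec_row_eq_zero hH i))
  · rw [mul_comm, mul_smul]
    exact Submodule.smul_mem _ _
      (minorOn_smul_mem_range_vecMulLinear hG hH (mulVec_row_eq_zero hH' i))

theorem mul_self_smul_mem_ker_smul {K : Type*} [CommRing K] [IsDomain K] {ρ : S →+* K}
    {M : Matrix (Fin l) (Fin n) S} {d : Fin l → Fin n} (hd : ρ (minorOn M d) ≠ 0)
    {N : Submodule S (Fin n → S)} {a : S} (haN : ∀ i, a • M.row i ∈ N)
    {w : Fin n → S} (hw : a • w ∈ LinearMap.range M.vecMulLinear) (hwd : ρ ∘ w ∘ d = 0) :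
    (a * a) • w ∈ RingHom.ker ρ • N := by
  obtain ⟨u, hu⟩ := hw
  have hu0 : ρ ∘ u = 0 := by
    rw [← minorOn_map] at hd
    refine eq_zero_of_vecMul_eq_zero hd (funext fun j => ?_)
    have hj : ρ ((u ᵥ* M) (d j)) = ρ ((a • w) (d j)) := congrArg (fun v => ρ (v (d j))) hu
    have hwj : ρ (w (d j)) = 0 := congrFun hwd j
    rw [RingHom.map_vecMul, Pi.smul_apply, smul_eq_mul, map_mul, hwj, mul_zero] at hj
    exact hj
  rw [mul_smul, ← hu, vecMulLinear_apply, vecMul_eq_sum, Finset.smul_sum]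
  refine Submodule.sum_mem _ fun i _ => ?_
  rw [smul_comm]
  exact Submodule.smul_mem_smul (congrFun hu0 i) (haN i)

/-- Away from `a` the row module of `V` is that of `H`, and away from `b` it is that of `H₀`. -/
theorem exists_rowsCommensurable_of_isCoprime {K : Type*} [CommRing K] [IsDomain K]
    [IsPrincipalIdealRing K] {ρ : S →+* K} (hρ : Function.Surjective ρ)
    (hker : IsNilpotent (RingHom.ker ρ)) {H H₀ : Matrix (Fin l) (Fin n) S} {d : Fin l → Fin n}
    (hH : ρ (minorOn H d) ≠ 0) (hH₀ : ρ (minorOn H₀ d) ≠ 0) {a b : S} (hab : IsCoprime a b)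
    (h : RowsCommensurable (a * b) H H₀) :
    ∃ V : Matrix (Fin l) (Fin n) S, RowsCommensurable a V H ∧ RowsCommensurable b V H₀ := by
  obtain ⟨hHH₀, hH₀H⟩ := And.imp exists_eq_mul_iff.1 exists_eq_mul_iff.1 h
  let N : Submodule S (Fin n → S) :=
    (LinearMap.range H.vecMulLinear).comap (LinearMap.lsmul S _ a) ⊓
      (LinearMap.range H₀.vecMulLinear).comap (LinearMap.lsmul S _ b)
  have hrow : ∀ (M : Matrix (Fin l) (Fin n) S) i, M.row i ∈ LinearMap.range M.vecMulLinear :=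
    fun M i => ⟨Pi.single i 1, single_one_vecMul i M⟩
  have hHN : ∀ i, a • H.row i ∈ N := fun i => by
    refine ⟨Submodule.smul_mem _ _ (Submodule.smul_mem _ _ (hrow H i)), ?_⟩
    change b • a • H.row i ∈ LinearMap.range H₀.vecMulLinear
    rw [← mul_smul, mul_comm]
    exact hHH₀ i
  have hH₀N : ∀ i, b • H₀.row i ∈ N := fun i => by
    refine ⟨?_, Submodule.smul_mem _ _ (Submodule.smul_mem _ _ (hrow H₀ i))⟩
    change a • b • H₀.row i ∈ LinearMap.range H.vecMulLinear
    rw [← mul_smul]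
    exact hH₀H i
  obtain ⟨V, hVN, hNV⟩ := exists_le_range_vecMulLinear_sup_ker_smul hρ (N := N) d fun w hw hw0 => by
    obtain ⟨s, t, hst⟩ := hab.mul_left hab |>.mul_right (hab.mul_left hab)
    rw [← one_smul S w, ← hst, add_smul, mul_smul s, mul_smul t]
    exact add_mem (Submodule.smul_mem _ _ (mul_self_smul_mem_ker_smul hH hHN hw.1 hw0))
      (Submodule.smul_mem _ _ (mul_self_smul_mem_ker_smul hH₀ hH₀N hw.2 hw0))
  have hN : N ≤ LinearMap.range V.vecMulLinear := le_of_le_sup_smul_of_isNilpotent hker hNV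
  exact ⟨V, .of_mem_range (fun i => (hVN i).1) fun i => hN (hHN i),
    .of_mem_range (fun i => (hVN i).2) fun i => hN (hH₀N i)⟩

end Commensurability

section NilpotentKernel

variable {S K : Type*} [CommRing S] [CommRing K] {ρ : S →+* K}

theorem isNilpotent_of_map_eq_zero (hker : IsNilpotent (RingHom.ker ρ)) {x : S} (hx : ρ x = 0) :
    IsNilpotent x := by
  obtain ⟨m, hm⟩ := hker
  exact ⟨m, by simpa [hm] using Ideal.pow_mem_pow ((RingHom.mem_ker).2 hx) m⟩

theorem isUnit_of_isUnit_map (hρ : Function.Surjective ρ) (hker : IsNilpotent (RingHom.ker ρ))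
    {x : S} (hx : IsUnit (ρ x)) : IsUnit x := by
  obtain ⟨z, hz⟩ := hx.exists_right_inv
  obtain ⟨y, rfl⟩ := hρ z
  have hnil : IsNilpotent (x * y - 1) :=
    isNilpotent_of_map_eq_zero hker (by rw [map_sub, map_mul, hz, map_one, sub_self])
  have hunit : IsUnit (x * y) := by simpa using hnil.isUnit_add_one
  exact isUnit_of_mul_isUnit_left hunit

theorem isCoprime_of_isCoprime_map (hρ : Function.Surjective ρ) (hker : IsNilpotent (RingHom.ker ρ))
    {x y : S} (hxy : IsCoprime (ρ x) (ρ y)) : IsCoprime x y := by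
  obtain ⟨a, b, hab⟩ := hxy
  obtain ⟨⟨a, rfl⟩, ⟨b, rfl⟩⟩ := And.intro (hρ a) (hρ b)
  have hunit : IsUnit (a * x + b * y) := isUnit_of_isUnit_map hρ hker (by
    rw [map_add, map_mul, map_mul, hab]
    exact isUnit_one)
  obtain ⟨u, hu⟩ := hunit.exists_left_inv
  exact ⟨u * a, u * b, by rw [← hu]; ring⟩

theorem exists_dvd_pow_of_map_eq (hker : IsNilpotent (RingHom.ker ρ)) {x y : S}
    (hxy : ρ x = ρ y) : ∃ m : ℕ, x ∣ y ^ m := by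
  obtain ⟨m, hm⟩ := isNilpotent_of_map_eq_zero hker (x := y - x) (by rw [map_sub, hxy, sub_self])
  exact ⟨m, by simpa [hm] using sub_dvd_pow_sub_pow y (y - x) m⟩

theorem exists_isCoprime_dvd_mul_of_prime [IsDomain K] [IsPrincipalIdealRing K]
    (hρ : Function.Surjective ρ) (hker : IsNilpotent (RingHom.ker ρ)) {f : K} (hf : Prime f)
    {s : S} (hs : ρ s ≠ 0) :
    ∃ a b : S, IsCoprime a b ∧ s ∣ a * b ∧ (∃ m : ℕ, ρ a = f ^ m) ∧ ¬f ∣ ρ b := by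
  obtain ⟨y, hy, hfy⟩ :=
    (FiniteMultiplicity.of_prime_left hf hs).exists_eq_pow_mul_and_not_dvd
  generalize multiplicity f (ρ s) = m at hy
  obtain ⟨⟨f, rfl⟩, ⟨y, rfl⟩⟩ := And.intro (hρ f) (hρ y)
  obtain ⟨N, hN⟩ := exists_dvd_pow_of_map_eq hker (x := s) (y := f ^ m * y)
    (by rw [hy, map_mul, map_pow])
  have hcop : IsCoprime (ρ f) (ρ y) := hf.irreducible.coprime_iff_not_dvd.2 hfy
  refine ⟨(f ^ m) ^ N, y ^ N, isCoprime_of_isCoprime_map hρ hker ?_, mul_pow (f ^ m) y N ▸ hN,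
    ⟨m * N, by rw [← pow_mul, map_pow]⟩, ?_⟩
  · simpa only [map_pow] using hcop.pow_left.pow_left.pow_right
  · rw [map_pow]
    exact fun h => hfy (hf.dvd_of_dvd_pow h)

end NilpotentKernel

section Polynomial

theorem polyToLS_injective (R : Type*) [CommRing R] : Function.Injective (polyToLS R) :=
  HahnSeries.ofPowerSeries_injective.comp (Polynomial.coe_injective R)

theorem isUnit_polyToLS_X (R : Type*) [CommRing R] : IsUnit (polyToLS R X) := by
  have hX : polyToLS R X = HahnSeries.single 1 1 := by simp [polyToLS]
  exact hX ▸ .of_mul_eq_one (HahnSeries.single (-1) 1) (by simp)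

theorem isUnit_polyToLS_of_isUnit_coeff_zero {R : Type*} [CommRing R] {y : R[X]}
    (hy : IsUnit (y.coeff 0)) : IsUnit (polyToLS R y) :=
  IsUnit.map (HahnSeries.ofPowerSeries ℤ R)
    (PowerSeries.isUnit_iff_constantCoeff.2 (by simpa using hy))

variable {R F : Type*} [CommRing R] [Field F] {φ : R →+* F}

theorem isNilpotent_ker_mapRingHom (hker : IsNilpotent (RingHom.ker φ)) :
    IsNilpotent (RingHom.ker (mapRingHom φ)) := by
  rw [Polynomial.ker_mapRingHom]
  exact hker.map (Ideal.mapHom C)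

theorem isUnit_polyToLS (hφ : Function.Surjective φ) (hker : IsNilpotent (RingHom.ker φ)) {x : R[X]}
    (hx : mapRingHom φ x ≠ 0) : IsUnit (polyToLS R x) := by
  obtain ⟨z, hz, hndvd⟩ := exists_eq_pow_rootMultiplicity_mul_and_not_dvd _ hx 0
  obtain ⟨y, rfl⟩ := Polynomial.map_surjective φ hφ z
  rw [C_0, sub_zero] at hz hndvd
  have hy : IsUnit (y.coeff 0) := isUnit_of_isUnit_map hφ hker (by
    rw [X_dvd_iff, coeff_map] at hndvd
    exact (isUnit_iff_ne_zero).2 hndvd)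
  have hnil : IsNilpotent (x - X ^ rootMultiplicity 0 (mapRingHom φ x) * y) :=
    isNilpotent_of_map_eq_zero (isNilpotent_ker_mapRingHom hker) (by
      rw [map_sub, map_mul, map_pow, coe_mapRingHom, map_X, ← coe_mapRingHom, sub_eq_zero]
      exact hz)
  have hunit : IsUnit (polyToLS R (X ^ rootMultiplicity 0 (mapRingHom φ x) * y)) := by
    rw [map_mul, map_pow]
    exact ((isUnit_polyToLS_X R).pow _).mul (isUnit_polyToLS_of_isUnit_coeff_zero hy)
  have hadd := (hnil.map (polyToLS R)).isUnit_add_left_of_commute hunit (Commute.all _ _)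
  rwa [← map_add, add_sub_cancel] at hadd

theorem mem_smul_top_of_forall_coeff_mem {I : Ideal R} {g : R[X]} (hg : ∀ i, g.coeff i ∈ I) :
    g ∈ I • (⊤ : Submodule R R[X]) := by
  rw [g.as_sum_range_C_mul_X_pow]
  refine sum_mem fun i _ => ?_
  rw [← smul_eq_C_mul]
  exact Submodule.smul_mem_smul (hg i) trivial

/-- Lifted from division with remainder in `F[X]` by Nakayama. -/
theorem exists_eq_mul_add_of_map_ne_zero (hφ : Function.Surjective φ)
    (hker : IsNilpotent (RingHom.ker φ)) {x : R[X]} (hx : mapRingHom φ x ≠ 0) (g : R[X]) :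
    ∃ q t : R[X], t.degree < (mapRingHom φ x).degree ∧ g = q * x + t := by
  let L : Submodule R R[X] := (Ideal.span {x}).restrictScalars R ⊔
    degreeLT R (mapRingHom φ x).natDegree
  have hL : (⊤ : Submodule R R[X]) ≤ L ⊔ RingHom.ker φ • ⊤ := fun g _ => by
    obtain ⟨q, hq⟩ := Polynomial.map_surjective φ hφ (mapRingHom φ g / mapRingHom φ x)
    obtain ⟨t, ht, htdeg⟩ := exists_degree_eq_of_mem_lifts
      ((mem_lifts _).2 (Polynomial.map_surjective φ hφ (mapRingHom φ g % mapRingHom φ x)))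
    have hz : g - (q * x + t) ∈ RingHom.ker φ • (⊤ : Submodule R R[X]) := by
      refine mem_smul_top_of_forall_coeff_mem fun i => ?_
      rw [RingHom.mem_ker, ← coeff_map, Polynomial.map_sub, Polynomial.map_add,
        Polynomial.map_mul, hq, ht, mul_comm, ← coe_mapRingHom, EuclideanDomain.div_add_mod,
        sub_self, coeff_zero]
    rw [← add_sub_cancel (q * x + t) g]
    refine Submodule.add_mem_sup (Submodule.add_mem_sup ?_ ?_) hz
    · exact Ideal.mul_mem_left _ _ (Ideal.mem_span_singleton_self x)
    · rw [mem_degreeLT, htdeg, ← degree_eq_natDegree hx]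
      exact degree_mod_lt _ hx
  obtain ⟨y, hy, t, ht, rfl⟩ := Submodule.mem_sup.1
    (le_of_le_sup_smul_of_isNilpotent hker hL (Submodule.mem_top (x := g)))
  obtain ⟨q, rfl⟩ := Ideal.mem_span_singleton'.1 hy
  exact ⟨q, t, by rwa [degree_eq_natDegree hx, ← mem_degreeLT], rfl⟩

theorem exists_isUnit_mul_monic (hφ : Function.Surjective φ) (hker : IsNilpotent (RingHom.ker φ))
    {x : R[X]} (hx : mapRingHom φ x ≠ 0) :
    ∃ w : R[X], IsUnit w ∧ (w * x).Monic ∧ (w * x).degree = (mapRingHom φ x).degree := by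
  have := φ.domain_nontrivial
  obtain ⟨w, t, ht, hwt⟩ := exists_eq_mul_add_of_map_ne_zero hφ hker hx
    (X ^ (mapRingHom φ x).natDegree)
  have hdeg : t.degree < (X ^ (mapRingHom φ x).natDegree : R[X]).degree := by
    rwa [degree_X_pow, ← degree_eq_natDegree hx]
  have hwx : w * x = X ^ (mapRingHom φ x).natDegree - t := by rw [hwt, add_sub_cancel_right]
  have hmonic : (w * x).Monic := hwx ▸ (monic_X_pow _).sub_of_left hdeg
  have hwxdeg : (w * x).degree = (mapRingHom φ x).degree := by
    rw [hwx, degree_sub_eq_left_of_degree_lt hdeg, degree_X_pow, degree_eq_natDegree hx]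
  refine ⟨w, isUnit_of_isUnit_map (Polynomial.map_surjective φ hφ)
    (isNilpotent_ker_mapRingHom hker) (isUnit_iff_degree_eq_zero.2 ?_), hmonic, hwxdeg⟩
  have hdegmap : (mapRingHom φ w).degree + (mapRingHom φ x).degree = (mapRingHom φ x).degree := by
    rw [← degree_mul, ← map_mul, coe_mapRingHom, hmonic.degree_map, hwxdeg, coe_mapRingHom]
  rwa [← zero_add (mapRingHom φ x).degree, ← add_assoc, add_zero,
    WithBot.add_right_inj (degree_ne_bot.2 hx)] at hdegmap

theorem mem_nonZeroDivisors_iff_map_ne_zero (hφ : Function.Surjective φ)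
    (hker : IsNilpotent (RingHom.ker φ)) {x : R[X]} :
    x ∈ nonZeroDivisors R[X] ↔ mapRingHom φ x ≠ 0 := by
  have := φ.domain_nontrivial
  refine ⟨fun hx h0 => ?_, fun hx => ?_⟩
  · obtain ⟨m, hm⟩ := isNilpotent_of_map_eq_zero (isNilpotent_ker_mapRingHom hker) h0
    exact nonZeroDivisors.ne_zero (pow_mem hx m) hm
  · obtain ⟨w, -, hmonic, -⟩ := exists_isUnit_mul_monic hφ hker hx
    exact (mul_mem_nonZeroDivisors.1 hmonic.mem_nonZeroDivisors).2

end Polynomial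

section Codes

variable {R : Type*} [CommRing R] {k l n : ℕ}

/-- Reduced internal degree matrix: an encoder of minimal internal degree among those of its code.
The comparison is, as in the theorem, between encoders of full row rank and the same size. -/
def IsRIDM (G : Matrix (Fin k) (Fin n) R[X]) : Prop :=
  FullRowRank G ∧ ∀ G' : Matrix (Fin k) (Fin n) R[X],
    FullRowRank G' → code G' = code G → intdeg G ≤ intdeg G'

theorem row_mem_code (V : Matrix (Fin l) (Fin n) R[X]) (i : Fin l) :
    polyToLS R ∘ V.row i ∈ code V :=
  ⟨Pi.single i 1, (single_one_vecMul i (V.map (polyToLS R))).symm⟩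

theorem code_subset_of_smul_eq_mul {V H : Matrix (Fin l) (Fin n) R[X]} {s : R[X]}
    (hs : IsUnit (polyToLS R s)) {P : Matrix (Fin l) (Fin l) R[X]} (h : s • V = P * H) :
    code V ⊆ code H := by
  rintro _ ⟨u, rfl⟩
  obtain ⟨t, ht⟩ := hs.exists_left_inv
  have hmap : polyToLS R s • V.map (polyToLS R) = P.map (polyToLS R) * H.map (polyToLS R) := by
    rw [← Matrix.map_mul, ← h]
    exact (Matrix.map_smulₛₗ (polyToLS R) (polyToLS R) s (map_mul _ s) V).symm
  refine ⟨t • (u ᵥ* P.map (polyToLS R)), ?_⟩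
  rw [smul_vecMul, vecMul_vecMul, ← hmap, vecMul_smul, smul_smul, ht, one_smul]

theorem RowsCommensurable.code_eq {V H : Matrix (Fin l) (Fin n) R[X]} {s : R[X]}
    (h : RowsCommensurable s V H) (hs : IsUnit (polyToLS R s)) : code V = code H :=
  let ⟨⟨_, hA⟩, ⟨_, hB⟩⟩ := h
  (code_subset_of_smul_eq_mul hs hA).antisymm (code_subset_of_smul_eq_mul hs hB)

theorem minorOn_smul_eq_mul_of_code_subset {V H : Matrix (Fin l) (Fin n) R[X]}
    (h : code V ⊆ code H) (c : Fin l → Fin n) :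
    minorOn H c • V = (V.submatrix id c * (H.submatrix id c).adjugate) * H := by
  choose U hU using fun i => h (row_mem_code V i)
  have hV : V.map (polyToLS R) = of U * H.map (polyToLS R) := funext hU
  have hVc : (V.submatrix id c).map (polyToLS R) = of U * (H.submatrix id c).map (polyToLS R) :=
    congrArg (fun M => M.submatrix id c) hV
  have hadj : (H.submatrix id c).adjugate.map (polyToLS R) =
      ((H.submatrix id c).map (polyToLS R)).adjugate :=
    (polyToLS R).map_adjugate _
  apply Matrix.map_injective (polyToLS_injective R)
  beta_reduce
  rw [Matrix.map_mul, Matrix.map_mul, hVc, hadj, Matrix.mul_assoc (of U), mul_adjugate,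
    Matrix.mul_smul, Matrix.mul_one, Matrix.smul_mul, ← hV,
    Matrix.map_smulₛₗ (polyToLS R) (polyToLS R) _ (map_mul _ _)]
  exact congrArg (· • V.map (polyToLS R)) ((polyToLS R).map_det _)

theorem mul_transpose_eq_zero_of_code_subset_dualCode {G : Matrix (Fin k) (Fin n) R[X]}
    {H : Matrix (Fin l) (Fin n) R[X]} (h : code H ⊆ dualCode (code G)) : G * Hᵀ = 0 := by
  ext1 i j
  apply polyToLS_injective R
  rw [Matrix.zero_apply, map_zero, ← h (row_mem_code H j) _ (row_mem_code G i), mul_apply, map_sum]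
  exact Finset.sum_congr rfl fun x _ => by rw [map_mul, mul_comm]; rfl

theorem exists_code_eq_minorOn_eq_mul [NeZero l] (V : Matrix (Fin l) (Fin n) R[X]) {w : R[X]}
    (hw : IsUnit w) : ∃ V' : Matrix (Fin l) (Fin n) R[X],
      code V' = code V ∧ ∀ c, minorOn V' c = w * minorOn V c := by
  let A : Matrix (Fin l) (Fin l) R[X] := diagonal (Function.update 1 0 w)
  have hA : A.det = w := by
    rw [det_diagonal, Finset.prod_update_of_mem (Finset.mem_univ _)]
    simp
  refine ⟨A * V, RowsCommensurable.code_eq (s := 1) ⟨⟨A, one_smul _ _⟩, A⁻¹, ?_⟩ (by simp),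
    fun c => by rw [minorOn_mul, hA]⟩
  rw [one_smul, nonsing_inv_mul_cancel_left _ _ (hA ▸ hw)]

end Codes

section InternalDegree

variable {R F : Type*} [CommRing R] [Field F] {φ : R →+* F} {l n : ℕ}

theorem fullRowRank_iff (hφ : Function.Surjective φ) (hker : IsNilpotent (RingHom.ker φ))
    {G : Matrix (Fin l) (Fin n) R[X]} :
    FullRowRank G ↔ ∃ c, mapRingHom φ (minorOn G c) ≠ 0 :=
  exists_congr fun _ => mem_nonZeroDivisors_iff_map_ne_zero hφ hker

theorem exists_isUnit_degree_mul_add_degree_map_eq (hφ : Function.Surjective φ)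
    (hker : IsNilpotent (RingHom.ker φ)) {σ τ : R[X]} (hσ : mapRingHom φ σ ≠ 0)
    (hτ : mapRingHom φ τ ≠ 0) : ∃ w : R[X], IsUnit w ∧ ∀ x y : R[X], σ * x = τ * y →
      (w * x).degree + (mapRingHom φ σ).degree = y.degree + (mapRingHom φ τ).degree := by
  obtain ⟨w₁, hw₁, hmonic₁, hdeg₁⟩ := exists_isUnit_mul_monic hφ hker hσ
  obtain ⟨w₂, hw₂, hmonic₂, hdeg₂⟩ := exists_isUnit_mul_monic hφ hker hτ
  obtain ⟨t, ht⟩ := hw₁.exists_left_inv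
  refine ⟨w₂ * t, hw₂.mul (.of_mul_eq_one w₁ ht), fun x y hxy => ?_⟩
  rw [← hdeg₁, ← hdeg₂, ← hmonic₁.degree_mul, ← hmonic₂.degree_mul]
  congr 1
  calc w₂ * t * x * (w₁ * σ) = t * w₁ * w₂ * (σ * x) := by ring
    _ = y * (w₂ * τ) := by rw [hxy, ht]; ring

theorem exists_degree_minorOn_eq_intdeg {V : Matrix (Fin l) (Fin n) R[X]} {c : Fin l → Fin n}
    (hc : minorOn V c ≠ 0) : ∃ d, minorOn V d ≠ 0 ∧ (minorOn V d).degree = intdeg V := by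
  obtain ⟨d, -, hd⟩ := Finset.exists_mem_eq_sup Finset.univ ⟨c, Finset.mem_univ c⟩
    fun x => (minorOn V x).degree
  refine ⟨d, fun h0 => hc ?_, hd.symm⟩
  rw [← degree_eq_bot, ← le_bot_iff, ← degree_zero (R := R), ← h0, ← hd]
  exact Finset.le_sup (f := fun x => (minorOn V x).degree) (Finset.mem_univ c)

theorem IsRIDM.degree_map_le [NeZero l] (hφ : Function.Surjective φ)
    (hker : IsNilpotent (RingHom.ker φ)) {H V : Matrix (Fin l) (Fin n) R[X]} (hH : IsRIDM H)
    (hV : FullRowRank V) (hcode : code V = code H) {σ τ : R[X]} (hσ : mapRingHom φ σ ≠ 0)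
    (hτ : mapRingHom φ τ ≠ 0) (h : ∀ c, σ * minorOn V c = τ * minorOn H c) :
    (mapRingHom φ σ).degree ≤ (mapRingHom φ τ).degree := by
  obtain ⟨w, hw, hdeg⟩ := exists_isUnit_degree_mul_add_degree_map_eq hφ hker hσ hτ
  obtain ⟨V', hcode', hV'⟩ := exists_code_eq_minorOn_eq_mul V hw
  have := φ.domain_nontrivial
  obtain ⟨c, hc⟩ := hV
  have hc' : minorOn V' c ∈ nonZeroDivisors R[X] :=
    hV' c ▸ mul_mem hw.mem_nonZeroDivisors hc
  obtain ⟨d, hd, hdV'⟩ := exists_degree_minorOn_eq_intdeg (nonZeroDivisors.ne_zero hc')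
  have hHd : (minorOn H d).degree ≤ (minorOn V' d).degree := calc
    (minorOn H d).degree ≤ intdeg H :=
      Finset.le_sup (f := fun x => (minorOn H x).degree) (Finset.mem_univ d)
    _ ≤ intdeg V' := hH.2 V' ⟨c, hc'⟩ (hcode'.trans hcode)
    _ = (minorOn V' d).degree := hdV'.symm
  refine (WithBot.add_le_add_iff_left (degree_ne_bot.2 hd)).1 ?_
  rw [hV', hdeg _ _ (h d), ← hV']
  gcongr

theorem IsRIDM.natDegree_minorGCD_map_le [NormalizedGCDMonoid F[X]] [NeZero l]
    (hφ : Function.Surjective φ) (hker : IsNilpotent (RingHom.ker φ))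
    {H V : Matrix (Fin l) (Fin n) R[X]} (hH : IsRIDM H) (hV : FullRowRank V)
    (hcode : code V = code H) :
    (minorGCD (H.map (mapRingHom φ))).natDegree ≤ (minorGCD (V.map (mapRingHom φ))).natDegree := by
  obtain ⟨c, hc⟩ := (fullRowRank_iff hφ hker).1 hH.1
  obtain ⟨c', hc'⟩ := (fullRowRank_iff hφ hker).1 hV
  let τ := (V.submatrix id c * (H.submatrix id c).adjugate).det
  have hminor : ∀ d, minorOn H c ^ l * minorOn V d = τ * minorOn H d := fun d => by
    rw [← minorOn_smul, minorOn_smul_eq_mul_of_code_subset hcode.subset c, minorOn_mul]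
  have hminor' : ∀ d, mapRingHom φ (minorOn H c ^ l) * minorOn (V.map (mapRingHom φ)) d =
      mapRingHom φ τ * minorOn (H.map (mapRingHom φ)) d := fun d => by
    rw [minorOn_map, minorOn_map, ← map_mul, ← map_mul, hminor]
  have hσ : mapRingHom φ (minorOn H c ^ l) ≠ 0 := map_pow (mapRingHom φ) _ l ▸ pow_ne_zero l hc
  have hτ : mapRingHom φ τ ≠ 0 := fun h0 => by
    have hzero := hminor' c'
    rw [h0, zero_mul, minorOn_map] at hzero
    exact mul_ne_zero hσ hc' hzero
  have hle := natDegree_le_natDegree (hH.degree_map_le hφ hker hV hcode hσ hτ hminor)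
  have hdeg := natDegree_eq_of_degree_eq
    (degree_eq_degree_of_associated (associated_mul_minorGCD_of_forall hminor'))
  rw [← minorOn_map] at hc hc'
  rw [natDegree_mul hσ (minorGCD_ne_zero hc'), natDegree_mul hτ (minorGCD_ne_zero hc)] at hdeg
  omega

end InternalDegree

section LinearIndependentRows

variable {l n : ℕ}

theorem exists_minorOn_ne_zero_of_linearIndependent_row_of_field {L : Type*} [Field L]
    {M : Matrix (Fin l) (Fin n) L} (hM : LinearIndependent L M.row) : ∃ c, minorOn M c ≠ 0 := by
  have hrank : Module.finrank L (Submodule.span L (Set.range M.col)) = l := by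
    rw [← rank_eq_finrank_span_cols, hM.rank_matrix, Fintype.card_fin]
  obtain ⟨f, hfM, -, hf⟩ := Submodule.exists_fun_fin_finrank_span_eq L (Set.range M.col)
  choose g hg using hfM
  let c : Fin l → Fin n := g ∘ Fin.cast hrank.symm
  have hc : LinearIndependent L (M.submatrix id c).col := by
    have hcol : (M.submatrix id c).col = f ∘ Fin.cast hrank.symm := funext fun i => hg _
    exact hcol ▸ hf.comp _ (Fin.cast_injective _)
  rw [linearIndependent_cols_iff_isUnit, isUnit_iff_isUnit_det] at hc
  exact ⟨c, hc.ne_zero⟩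

theorem exists_minorOn_ne_zero_of_linearIndependent_row {S : Type*} [CommRing S] [IsDomain S]
    {M : Matrix (Fin l) (Fin n) S} (hM : LinearIndependent S M.row) : ∃ c, minorOn M c ≠ 0 := by
  let L := FractionRing S
  let ι : (Fin n → S) →ₗ[S] Fin n → L := (Algebra.linearMap S L).compLeft (Fin n)
  have hι : LinearMap.ker ι = ⊥ := LinearMap.ker_eq_bot.2 fun v w hvw =>
    funext fun j => IsFractionRing.injective S L (congrFun hvw j)
  have hML : LinearIndependent L (M.map (algebraMap S L)).row :=
    (LinearIndependent.iff_fractionRing S L).1 (hM.map' ι hι)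
  obtain ⟨c, hc⟩ := exists_minorOn_ne_zero_of_linearIndependent_row_of_field hML
  rw [minorOn_map] at hc
  exact ⟨c, fun h0 => hc (by rw [h0, map_zero])⟩

theorem prime_dvd_of_forall_dvd_minorOn {T : Type*} [CommRing T] [IsDomain T] {q : T}
    (hq : Prime q) {V : Matrix (Fin l) (Fin n) T} {d : Fin l → Fin n} (hd : minorOn V d ≠ 0)
    {r : T} (hr : ∀ w, q • w ∈ LinearMap.range V.vecMulLinear →
      r • w ∈ LinearMap.range V.vecMulLinear)
    (hdvd : ∀ c, q ∣ minorOn V c) : q ∣ r := by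
  have := (Ideal.span_singleton_prime hq.ne_zero).2 hq
  let f := Ideal.Quotient.mk (Ideal.span {q})
  have hf : ∀ x, f x = 0 ↔ q ∣ x := fun x => Ideal.Quotient.eq_zero_iff_dvd q x
  by_contra hqr
  obtain ⟨c, hc⟩ := exists_minorOn_ne_zero_of_linearIndependent_row (M := V.map f) <| by
    rw [← vecMul_injective_iff, ← coe_vecMulLinear, ← LinearMap.ker_eq_bot, LinearMap.ker_eq_bot']
    intro ybar hybar
    obtain ⟨y, rfl⟩ := Ideal.Quotient.mk_surjective.comp_left ybar
    have hqyV : ∀ j, q ∣ (y ᵥ* V) j := fun j => by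
      rw [← hf, RingHom.map_vecMul]
      exact congrFun hybar j
    choose w hw using hqyV
    have hyV : y ᵥ* V = q • w := funext hw
    obtain ⟨z, hz⟩ := hr w ⟨y, hyV⟩
    have hzero : (r • y - q • z) ᵥ* V.submatrix id d = 0 := by
      have hV : (r • y - q • z) ᵥ* V = 0 := by
        rw [sub_vecMul, smul_vecMul, smul_vecMul, hyV, ← vecMulLinear_apply V z, hz, smul_comm,
          sub_self]
      exact funext fun j => congrFun hV (d j)
    have hry : r • y = q • z := sub_eq_zero.1 (eq_zero_of_vecMul_eq_zero hd hzero)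
    exact funext fun i => (hf _).2 ((hq.dvd_or_dvd ⟨z i, congrFun hry i⟩).resolve_left hqr)
  rw [minorOn_map] at hc
  exact hc ((hf _).2 (hdvd c))

end LinearIndependentRows

section OrthogonalComplement

theorem isUnit_map_of_forall_prime {T K : Type*} [CommRing T] [UniqueFactorizationMonoid T]
    [CommRing K] {ρ : T →+* K} {x : T} (hx : x ≠ 0)
    (h : ∀ q, Prime q → q ∣ x → IsUnit (ρ q)) : IsUnit (ρ x) := by
  induction x using UniqueFactorizationMonoid.induction_on_prime with
  | h₁ => exact absurd rfl hx
  | h₂ x hunit => exact hunit.map ρ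
  | h₃ a q ha hq ih =>
    rw [map_mul]
    exact (h q hq (dvd_mul_right _ _)).mul (ih ha fun q' hq' hdvd => h q' hq' (hdvd.mul_left _))

variable {k l n : ℕ}

theorem exists_mulVec_eq_zero_comp_inr_eq_smul {S : Type*} [CommRing S]
    (G : Matrix (Fin k) (Fin n) S) (e : Fin k ⊕ Fin l ≃ Fin n) (u : Fin l → S) :
    ∃ w : Fin n → S, G *ᵥ w = 0 ∧ w ∘ e ∘ Sum.inr = minorOn G (e ∘ Sum.inl) • u := by
  let A := G.submatrix id (e ∘ Sum.inl)
  let B := G.submatrix id (e ∘ Sum.inr)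
  let w := Sum.elim (-(A.adjugate *ᵥ B *ᵥ u)) (A.det • u)
  refine ⟨w ∘ e.symm, ?_, funext fun j => by simp [w, A, minorOn]⟩
  have hG : G.submatrix id e = fromCols A B := by
    ext i (j | j) <;> rfl
  calc G *ᵥ (w ∘ e.symm) = G.submatrix id e *ᵥ w := by
        rw [submatrix_mulVec_equiv]; rfl
    _ = 0 := by
      rw [hG, fromCols_mulVec_sumElim, mulVec_neg, mulVec_mulVec, mul_adjugate, smul_mulVec,
        one_mulVec, mulVec_smul, neg_add_cancel]

theorem map_minorOn_comp_inr_ne_zero {S K : Type*} [CommRing S] [CommRing K] [IsDomain K]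
    {ρ : S →+* K} {G : Matrix (Fin k) (Fin n) S} {V : Matrix (Fin l) (Fin n) S}
    {e : Fin k ⊕ Fin l ≃ Fin n} (hG : ρ (minorOn G (e ∘ Sum.inl)) ≠ 0) {r : S} (hr : ρ r ≠ 0)
    (hV : ∀ w, G *ᵥ w = 0 → r • w ∈ LinearMap.range V.vecMulLinear) :
    ρ (minorOn V (e ∘ Sum.inr)) ≠ 0 := by
  choose w hGw hwe using fun i : Fin l => exists_mulVec_eq_zero_comp_inr_eq_smul G e (Pi.single i 1)
  choose Y hY using fun i => hV (w i) (hGw i)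
  have hYV : of Y * V.submatrix id (e ∘ Sum.inr) = (r * minorOn G (e ∘ Sum.inl)) • 1 := by
    ext i j
    have hij : (Y i ᵥ* V) (e (Sum.inr j)) = r * (w i) (e (Sum.inr j)) :=
      congrFun (hY i) (e (Sum.inr j))
    have hwij : w i (e (Sum.inr j)) = minorOn G (e ∘ Sum.inl) * Pi.single (M := fun _ => S) i 1 j :=
      congrFun (hwe i) j
    rw [hwij, ← mul_assoc] at hij
    rw [Matrix.smul_apply, one_eq_pi_single, smul_eq_mul, ← hij]
    rfl
  have hdet := congrArg (fun M => ρ M.det) hYV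
  simp only [det_mul, map_mul, det_smul, det_one, mul_one, map_pow, Fintype.card_fin] at hdet
  exact right_ne_zero_of_mul (hdet ▸ pow_ne_zero l (mul_ne_zero hr hG))

variable {T K : Type*} [CommRing T] [IsDomain T] [CommRing K] [IsDomain K] {ρ : T →+* K}

theorem mem_ker_smul_ker_of_comp_inr_eq_zero (hker : (RingHom.ker ρ).IsPrincipal)
    {G : Matrix (Fin k) (Fin n) T} {e : Fin k ⊕ Fin l ≃ Fin n}
    (hG : ρ (minorOn G (e ∘ Sum.inl)) ≠ 0) {w : Fin n → T} (hw : G *ᵥ w = 0)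
    (hw0 : ρ ∘ w ∘ e ∘ Sum.inr = 0) : w ∈ RingHom.ker ρ • LinearMap.ker G.mulVecLin := by
  obtain ⟨ϖ, hϖ⟩ := hker
  have hρw : ρ ∘ w = 0 := by
    rw [← minorOn_map] at hG
    refine eq_zero_of_mulVec_eq_zero_of_comp_inr (mem_nonZeroDivisors_of_ne_zero hG) ?_ hw0
    exact funext fun i => by rw [← RingHom.map_mulVec, hw, Pi.zero_apply, map_zero, Pi.zero_apply]
  have hdvd : ∀ j, ϖ ∣ w j := fun j => by
    rw [← Ideal.mem_span_singleton, ← Ideal.submodule_span_eq, ← hϖ]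
    exact congrFun hρw j
  choose v hv using hdvd
  obtain rfl : w = ϖ • v := funext hv
  rcases eq_or_ne ϖ 0 with rfl | hϖ0
  · rw [zero_smul]
    exact zero_mem _
  · rw [mulVec_smul] at hw
    refine Submodule.smul_mem_smul ?_ ((smul_eq_zero.1 hw).resolve_left hϖ0)
    rw [hϖ]
    exact Submodule.mem_span_singleton_self ϖ

theorem exists_mul_transpose_eq_zero_and_isUnit_map_minorGCD [IsNoetherianRing T]
    [NormalizedGCDMonoid T] [IsPrincipalIdealRing K]
    (hρ : Function.Surjective ρ) (hker : (RingHom.ker ρ).IsPrincipal)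
    {G : Matrix (Fin k) (Fin n) T} {e : Fin k ⊕ Fin l ≃ Fin n}
    (hG : ρ (minorOn G (e ∘ Sum.inl)) ≠ 0) :
    ∃ V : Matrix (Fin l) (Fin n) T,
      G * Vᵀ = 0 ∧ ρ (minorOn V (e ∘ Sum.inr)) ≠ 0 ∧ IsUnit (ρ (minorGCD V)) := by
  obtain ⟨V, hVG, hV⟩ := exists_le_range_vecMulLinear_sup_ker_smul hρ
    (N := LinearMap.ker G.mulVecLin) (e ∘ Sum.inr) fun w hw hw0 =>
      mem_ker_smul_ker_of_comp_inr_eq_zero hker hG hw hw0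
  obtain ⟨r, hr, hrV⟩ := Submodule.exists_sub_one_mem_and_smul_le_of_fg_of_le_sup
    (IsNoetherian.noetherian _) le_rfl hV
  have hρr : ρ r = 1 := by rwa [RingHom.mem_ker, map_sub, map_one, sub_eq_zero] at hr
  have hrw : ∀ w, G *ᵥ w = 0 → r • w ∈ LinearMap.range V.vecMulLinear := fun w hw =>
    hrV (Submodule.smul_mem_pointwise_smul _ _ _ hw)
  have hGV : G * Vᵀ = 0 := by
    ext i j
    exact congrFun (hVG j) i
  have hVe := map_minorOn_comp_inr_ne_zero hG (hρr ▸ one_ne_zero) hrw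
  have hVe0 : minorOn V (e ∘ Sum.inr) ≠ 0 := fun h0 => hVe (by rw [h0, map_zero])
  refine ⟨V, hGV, hVe, isUnit_map_of_forall_prime (minorGCD_ne_zero hVe0) fun q hq hqV => ?_⟩
  have hqr : q ∣ r := by
    refine prime_dvd_of_forall_dvd_minorOn hq hVe0 (fun w hw => hrw w ?_) (dvd_minorGCD_iff.1 hqV)
    obtain ⟨y, hy⟩ := hw
    have hqw : q • (G *ᵥ w) = 0 := by
      rw [← mulVec_smul, ← hy, vecMulLinear_apply, ← mulVec_transpose, mulVec_mulVec, hGV,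
        zero_mulVec]
    exact (smul_eq_zero.1 hqw).resolve_left hq.ne_zero
  exact isUnit_of_dvd_one (hρr ▸ map_dvd ρ hqr)

theorem minorGCD_map_dvd_of_isUnit_map_minorGCD [NormalizedGCDMonoid T] [NormalizedGCDMonoid K]
    {G : Matrix (Fin k) (Fin n) T} {V : Matrix (Fin l) (Fin n) T} {e : Fin k ⊕ Fin l ≃ Fin n}
    (hGV : G * Vᵀ = 0) (hV : ρ (minorOn V (e ∘ Sum.inr)) ≠ 0) (hunit : IsUnit (ρ (minorGCD V))) :
    minorGCD (V.map ρ) ∣ minorGCD (G.map ρ) := by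
  have hdvd : ρ (minorOn V (e ∘ Sum.inr)) ∣ ρ (minorOn G (e ∘ Sum.inl)) := by
    rw [← hunit.dvd_mul_right, ← map_mul]
    exact map_dvd ρ ((dvd_mul_right _ _).trans (associated_mul_minorGCD hGV e).symm.dvd)
  have hassoc := associated_mul_minorGCD (mul_transpose_map_eq_zero ρ hGV) e
  rw [minorOn_map, minorOn_map] at hassoc
  exact (mul_dvd_mul_iff_left hV).1 ((mul_dvd_mul_right hdvd _).trans hassoc.dvd)

end OrthogonalComplement

section Comparison

theorem minorOn_comp_inr_ne_zero {K : Type*} [CommRing K] [IsDomain K] {k l n : ℕ}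
    {G : Matrix (Fin k) (Fin n) K} {H : Matrix (Fin l) (Fin n) K} (hGH : G * Hᵀ = 0)
    {e : Fin k ⊕ Fin l ≃ Fin n} (hG : minorOn G (e ∘ Sum.inl) ≠ 0) {c : Fin l → Fin n}
    (hc : minorOn H c ≠ 0) : minorOn H (e ∘ Sum.inr) ≠ 0 := by
  have hkl : k + l = n := by simpa using Fintype.card_congr e
  obtain ⟨d, rfl⟩ := exists_sumEquiv_comp_inr_eq hkl (injective_of_minorOn_ne_zero hc)
  exact left_ne_zero_of_mul
    ((associated_minorOn_mul_minorOn hGH e d).ne_zero_iff.1 (mul_ne_zero hG hc))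

variable {R F : Type*} [CommRing R] [Field F] {φ : R →+* F} {k l n : ℕ}

theorem pow_dvd_of_dvd_pow_mul_of_natDegree_le {f x v : F[X]} (hf : Prime f) (hx : x ≠ 0)
    {m i : ℕ} (hv : v ∣ f ^ m * x) (hdeg : x.natDegree ≤ v.natDegree) (hi : f ^ i ∣ x) :
    f ^ i ∣ v := by
  rcases eq_or_ne v 0 with rfl | hv0
  · exact dvd_zero _
  obtain ⟨v', hv', hfv'⟩ :=
    (FiniteMultiplicity.of_prime_left hf hv0).exists_eq_pow_mul_and_not_dvd
  generalize multiplicity f v = t at hv'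
  subst hv'
  have hcop : ∀ j, IsCoprime v' (f ^ j) := fun j =>
    (hf.irreducible.coprime_iff_not_dvd.2 hfv').symm.pow_right
  have hv'x : v' ∣ x := (hcop m).dvd_of_dvd_mul_left ((dvd_mul_left _ _).trans hv)
  have hle := (natDegree_le_of_dvd ((hcop i).mul_dvd hv'x hi) hx).trans hdeg
  have hv'0 := right_ne_zero_of_mul hv0
  rw [natDegree_mul hv'0 (pow_ne_zero i hf.ne_zero), natDegree_mul (pow_ne_zero t hf.ne_zero) hv'0,
    natDegree_pow, natDegree_pow, add_comm, add_le_add_iff_right] at hle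
  exact (pow_dvd_pow f (Nat.le_of_mul_le_mul_right hle hf.irreducible.natDegree_pos)).mul_right v'

theorem RowsCommensurable.minorGCD_map_dvd {S K : Type*} [CommRing S] [CommRing K]
    [NormalizedGCDMonoid K] (ρ : S →+* K) {V H : Matrix (Fin l) (Fin n) S} {a : S}
    (h : RowsCommensurable a V H) :
    minorGCD (V.map ρ) ∣ ρ a ^ l * minorGCD (H.map ρ) := by
  obtain ⟨-, B, hB⟩ := h
  refine minorGCD_dvd_pow_mul_minorGCD (A := B.map ρ) ?_
  rw [← Matrix.map_mul, ← hB]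
  exact (Matrix.map_smulₛₗ ρ ρ a (map_mul _ a) H).symm

theorem RowsCommensurable.map_minorOn_ne_zero {S K : Type*} [CommRing S] [CommRing K] [IsDomain K]
    {ρ : S →+* K} {V H : Matrix (Fin l) (Fin n) S} {a : S} (h : RowsCommensurable a V H)
    (ha : ρ a ≠ 0) {c : Fin l → Fin n} (hc : ρ (minorOn H c) ≠ 0) : ρ (minorOn V c) ≠ 0 := by
  obtain ⟨-, B, hB⟩ := h
  have hmul : a ^ l * minorOn H c = B.det * minorOn V c := by
    rw [← minorOn_smul, hB, minorOn_mul]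
  refine right_ne_zero_of_mul (a := ρ B.det) ?_
  rw [← map_mul, ← hmul, map_mul, map_pow]
  exact mul_ne_zero (pow_ne_zero l ha) hc

theorem IsRIDM.minorGCD_map_dvd_of_rowsCommensurable [NormalizedGCDMonoid F[X]] [NeZero l]
    (hφ : Function.Surjective φ) (hker : IsNilpotent (RingHom.ker φ))
    {H H₀ : Matrix (Fin l) (Fin n) R[X]} (hH : IsRIDM H) {d : Fin l → Fin n}
    (hd : mapRingHom φ (minorOn H d) ≠ 0) (hd₀ : mapRingHom φ (minorOn H₀ d) ≠ 0) {s : R[X]}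
    (hs : mapRingHom φ s ≠ 0) (h : RowsCommensurable s H H₀) :
    minorGCD (H.map (mapRingHom φ)) ∣ minorGCD (H₀.map (mapRingHom φ)) := by
  have hρ : Function.Surjective (mapRingHom φ) := Polynomial.map_surjective φ hφ
  have hkerρ := isNilpotent_ker_mapRingHom hker
  have hΔH : minorGCD (H.map (mapRingHom φ)) ≠ 0 :=
    minorGCD_ne_zero (c := d) (by rwa [minorOn_map])
  refine (UniqueFactorizationMonoid.dvd_iff_emultiplicity_le hΔH).2 fun f hf =>
    emultiplicity_le_emultiplicity_iff.2 fun i hi => ?_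
  obtain ⟨a, b, hab, hsab, ⟨m, ha⟩, hfb⟩ := exists_isCoprime_dvd_mul_of_prime hρ hkerρ hf hs
  have ha0 : mapRingHom φ a ≠ 0 := ha ▸ pow_ne_zero m hf.ne_zero
  obtain ⟨V, hVH, hVH₀⟩ := exists_rowsCommensurable_of_isCoprime hρ hkerρ hd hd₀ hab (h.mono hsab)
  have hVfull : FullRowRank V := (fullRowRank_iff hφ hker).2 ⟨d, hVH.map_minorOn_ne_zero ha0 hd⟩
  have hdeg := hH.natDegree_minorGCD_map_le hφ hker hVfull
    (hVH.code_eq (isUnit_polyToLS hφ hker ha0))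
  have hdvd := hVH.minorGCD_map_dvd (mapRingHom φ)
  rw [ha, ← pow_mul] at hdvd
  have hfV := pow_dvd_of_dvd_pow_mul_of_natDegree_le hf hΔH hdvd hdeg hi
  exact (hf.irreducible.coprime_iff_not_dvd.2 hfb).pow.dvd_of_dvd_mul_left
    (hfV.trans (hVH₀.minorGCD_map_dvd (mapRingHom φ)))

end Comparison

section Duality

theorem isNilpotent_ker_castHom (p r : ℕ) (hr : r ≠ 0) :
    IsNilpotent (RingHom.ker (ZMod.castHom (dvd_pow_self p hr) (ZMod p))) := by
  have hspan : RingHom.ker (ZMod.castHom (dvd_pow_self p hr) (ZMod p)) =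
      Ideal.span {(p : ZMod (p ^ r))} := by
    rw [← Ideal.map_comap_of_surjective (Int.castRingHom (ZMod (p ^ r))) ZMod.intCast_surjective
      (RingHom.ker _), RingHom.comap_ker, RingHom.eq_intCast' (RingHom.comp _ _),
      ZMod.ker_intCastRingHom, Ideal.map_span, Set.image_singleton, map_natCast]
  refine ⟨r, ?_⟩
  rw [hspan, Ideal.span_singleton_pow, ← Nat.cast_pow, ZMod.natCast_self, Ideal.span_singleton_zero,
    Submodule.zero_eq_bot]

theorem isPrincipal_ker_mapRingHom {A B : Type*} [CommRing A] [IsPrincipalIdealRing A] [CommRing B]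
    (f : A →+* B) : (RingHom.ker (mapRingHom f)).IsPrincipal := by
  rw [Polynomial.ker_mapRingHom, ← Ideal.span_singleton_generator (RingHom.ker f), Ideal.map_span,
    Set.image_singleton]
  exact ⟨_, rfl⟩

variable {A R F : Type*} [CommRing A] [IsDomain A] [IsPrincipalIdealRing A] [CommRing R] [Field F]
  {ψ : A →+* R} {φ : R →+* F} {k l n : ℕ}

theorem exists_mul_transpose_eq_zero_and_minorGCD_map_dvd [NormalizedGCDMonoid F[X]]
    (hψ : Function.Surjective ψ) (hφ : Function.Surjective φ) {G : Matrix (Fin k) (Fin n) R[X]}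
    {e : Fin k ⊕ Fin l ≃ Fin n} (hG : mapRingHom φ (minorOn G (e ∘ Sum.inl)) ≠ 0) :
    ∃ H : Matrix (Fin l) (Fin n) R[X], G * Hᵀ = 0 ∧
      mapRingHom φ (minorOn H (e ∘ Sum.inr)) ≠ 0 ∧
      minorGCD (H.map (mapRingHom φ)) ∣ minorGCD (G.map (mapRingHom φ)) := by
  obtain ⟨_⟩ : Nonempty (NormalizedGCDMonoid A[X]) := inferInstance
  have hmap : ∀ x, mapRingHom φ (mapRingHom ψ x) = mapRingHom (φ.comp ψ) x := fun x =>
    congrArg (· x) (mapRingHom_comp φ ψ)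
  choose G' hG' using fun i j => Polynomial.map_surjective ψ hψ (G i j)
  obtain rfl : (of G').map (mapRingHom ψ) = G := ext hG'
  rw [minorOn_map, hmap] at hG
  obtain ⟨V, hGV, hV, hunit⟩ := exists_mul_transpose_eq_zero_and_isUnit_map_minorGCD
    (Polynomial.map_surjective (φ.comp ψ) (hφ.comp hψ)) (isPrincipal_ker_mapRingHom (φ.comp ψ)) hG
  refine ⟨V.map (mapRingHom ψ), mul_transpose_map_eq_zero _ hGV, by rwa [minorOn_map, hmap], ?_⟩
  rw [Matrix.map_map, Matrix.map_map, ← RingHom.coe_comp, mapRingHom_comp]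
  exact minorGCD_map_dvd_of_isUnit_map_minorGCD hGV hV hunit

theorem IsRIDM.minorGCD_map_dvd_of_mul_transpose_eq_zero [NormalizedGCDMonoid F[X]]
    (hψ : Function.Surjective ψ) (hφ : Function.Surjective φ) (hker : IsNilpotent (RingHom.ker φ))
    (hkl : k + l = n) {G : Matrix (Fin k) (Fin n) R[X]} {H : Matrix (Fin l) (Fin n) R[X]}
    (hG : FullRowRank G) (hH : IsRIDM H) (hGH : G * Hᵀ = 0) :
    minorGCD (H.map (mapRingHom φ)) ∣ minorGCD (G.map (mapRingHom φ)) := by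
  rcases eq_or_ne l 0 with rfl | hl
  · refine (minorGCD_dvd_minorOn _ Fin.elim0).trans ?_
    rw [minorOn_fin_zero]
    exact one_dvd _
  have : NeZero l := ⟨hl⟩
  obtain ⟨c, hc⟩ := (fullRowRank_iff hφ hker).1 hG
  obtain ⟨d, hd⟩ := (fullRowRank_iff hφ hker).1 hH.1
  have hc0 : minorOn G c ≠ 0 := fun h0 => hc (by rw [h0, map_zero])
  obtain ⟨e, rfl⟩ := exists_sumEquiv_comp_inl_eq hkl (injective_of_minorOn_ne_zero hc0)
  have hHe : mapRingHom φ (minorOn H (e ∘ Sum.inr)) ≠ 0 := by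
    rw [← minorOn_map] at hc hd ⊢
    exact minorOn_comp_inr_ne_zero (mul_transpose_map_eq_zero _ hGH) hc hd
  obtain ⟨H₀, hGH₀, hH₀e, hdvd⟩ :=
    exists_mul_transpose_eq_zero_and_minorGCD_map_dvd hψ hφ hc
  have hcomm := rowsCommensurable_of_mul_transpose_eq_zero
    ((mem_nonZeroDivisors_iff_map_ne_zero hφ hker).2 hc) hGH hGH₀
  have hs : mapRingHom φ (minorOn H (e ∘ Sum.inr) * minorOn H₀ (e ∘ Sum.inr)) ≠ 0 := by
    rw [map_mul]
    exact mul_ne_zero hHe hH₀e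
  exact (hH.minorGCD_map_dvd_of_rowsCommensurable hφ hker hHe hH₀e hs hcomm).trans hdvd

theorem residual_structural_polynomial_dual_general [NormalizedGCDMonoid F[X]]
    (hψ : Function.Surjective ψ) (hφ : Function.Surjective φ) (hker : IsNilpotent (RingHom.ker φ))
    (hkl : k + l = n) {G : Matrix (Fin k) (Fin n) R[X]} {H : Matrix (Fin l) (Fin n) R[X]}
    (hG : IsRIDM G) (hH : IsRIDM H) (hdual : code H ⊆ dualCode (code G)) :
    minorGCD (G.map (mapRingHom φ)) = minorGCD (H.map (mapRingHom φ)) := by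
  have hGH : G * Hᵀ = 0 := mul_transpose_eq_zero_of_code_subset_dualCode hdual
  have hHG : H * Gᵀ = 0 := mul_transpose_eq_zero_comm.1 hGH
  exact dvd_antisymm_of_normalize_eq Finset.normalize_gcd Finset.normalize_gcd
    (hG.minorGCD_map_dvd_of_mul_transpose_eq_zero hψ hφ hker (add_comm l k ▸ hkl) hH.1 hHG)
    (hH.minorGCD_map_dvd_of_mul_transpose_eq_zero hψ hφ hker hkl hG.1 hGH)

end Duality

/-- Duality theorem: the Residual Structural Polynomial of a free convolutional code
equals that of its dual code, computed from RIDM encoders `G` of `C` and `H` of `C⊥`. -/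
theorem residual_structural_polynomial_dual
    (p : ℕ) [Fact p.Prime] (r : ℕ) (hr : r ≠ 0) (k n : ℕ) (hk : k ≤ n)
    (G : Matrix (Fin k) (Fin n) (Polynomial (ZMod (p ^ r))))
    (H : Matrix (Fin (n - k)) (Fin n) (Polynomial (ZMod (p ^ r))))
    (hG : FullRowRank G)
    (hGmin : ∀ G' : Matrix (Fin k) (Fin n) (Polynomial (ZMod (p ^ r))),
      FullRowRank G' → code G' = code G → intdeg G ≤ intdeg G')
    (hH : FullRowRank H)
    (hdual : code H = dualCode (code G))
    (hHmin : ∀ H' : Matrix (Fin (n - k)) (Fin n) (Polynomial (ZMod (p ^ r))),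
      FullRowRank H' → code H' = code H → intdeg H ≤ intdeg H') :
    gcdMinors (reduceMod p r hr G) = gcdMinors (reduceMod p r hr H) :=
  residual_structural_polynomial_dual_general (ψ := Int.castRingHom (ZMod (p ^ r)))
    ZMod.intCast_surjective (ZMod.castHom_surjective (dvd_pow_self p hr))
    (isNilpotent_ker_castHom p r hr) (Nat.add_sub_of_le hk) ⟨hG, hGmin⟩ ⟨hH, hHmin⟩ hdual.subset
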